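/- arXiv:2511.13933 — 3 statements merged into one kernel-verified Lean document; each statement's English description precedes it below -/
import Mathlib

section
/- Let J be a 5×5 real positive definite matrix and let U denote its top-left 3×3 block. Then the trace of the top-left 3×3 block of J⁻¹ satisfies tr([J⁻¹]_{1:3,1:3}) ≥ 9 / tr(U). -/
/-!
Positive semidefiniteness of `(t - J) J⁻¹ (t - J)` gives `t² (J⁻¹)ᵢᵢ - 2 t + Jᵢᵢ ≥ 0` for each
index `i` and each real `t` (`diag_inv_quadratic_nonneg`). Summing over the three leading indices,
with `T` the trace of the block of `J` and `S` that of the block of `J⁻¹`, yields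
`t² S - 6 t + T ≥ 0`; the choice `t = T / 3` turns this into `S T ≥ 9`. No Schur complement or
eigenvalue argument is needed.
-/

/-- For every real `t` the matrix `(t - J) J⁻¹ (t - J) = t² J⁻¹ - 2 t + J` is positive
semidefinite, hence has nonnegative diagonal. -/
lemma diag_inv_quadratic_nonneg {n : Type*} [Fintype n] [DecidableEq n] {J : Matrix n n ℝ}
    (hJ : J.PosDef) (t : ℝ) (i : n) : 0 ≤ t ^ 2 * J⁻¹ i i - 2 * t + J i i := by
  have hdet : IsUnit J.det := (Matrix.isUnit_iff_isUnit_det J).mp hJ.isUnit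
  have hpsd := hJ.inv.posSemidef.conjTranspose_mul_mul_same (t • (1 : Matrix n n ℝ) - J)
  have hexpand : (t • (1 : Matrix n n ℝ) - J).conjTranspose * J⁻¹ * (t • (1 : Matrix n n ℝ) - J)
      = t ^ 2 • J⁻¹ - (2 * t) • (1 : Matrix n n ℝ) + J := by
    rw [Matrix.conjTranspose_sub, Matrix.conjTranspose_smul, Matrix.conjTranspose_one,
      hJ.isHermitian.eq]
    simp only [star_trivial, sub_mul, mul_sub, smul_mul_assoc, mul_smul_comm, one_mul, mul_one,
      Matrix.mul_nonsing_inv J hdet, Matrix.nonsing_inv_mul J hdet]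
    module
  rw [hexpand] at hpsd
  simpa using hpsd.diag_nonneg (i := i)

/-- **Lemma 1 (paper).** For a 5×5 real positive definite matrix `J` with top-left
3×3 block `U`, the trace of the top-left 3×3 block of `J⁻¹` is at least `9 / tr U`. -/
theorem bcrb_trace_lower_bound (J : Matrix (Fin 5) (Fin 5) ℝ) (hJ : J.PosDef) :
    9 / (∑ i : Fin 3, J (Fin.castLE (by norm_num) i) (Fin.castLE (by norm_num) i)) ≤
      ∑ i : Fin 3, J⁻¹ (Fin.castLE (by norm_num) i) (Fin.castLE (by norm_num) i) := by
  set T := ∑ i : Fin 3, J (Fin.castLE (by norm_num) i) (Fin.castLE (by norm_num) i) with hT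
  set S := ∑ i : Fin 3, J⁻¹ (Fin.castLE (by norm_num) i) (Fin.castLE (by norm_num) i) with hS
  have hTpos : 0 < T := Finset.sum_pos (fun _ _ => hJ.diag_pos) Finset.univ_nonempty
  -- `t = T / 3` makes the summed quadratic `t² S - 6 t + T` equal to `T (T S - 9) / 9`.
  have hquad : 0 ≤ (T / 3) ^ 2 * S - 6 * (T / 3) + T := by
    have h := Finset.sum_nonneg fun (i : Fin 3) (_ : i ∈ Finset.univ) =>
      diag_inv_quadratic_nonneg hJ (T / 3) (Fin.castLE (by norm_num) i)
    rw [Finset.sum_add_distrib, Finset.sum_sub_distrib, ← Finset.mul_sum, ← hS, ← hT,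
      Finset.sum_const, Finset.card_univ, Fintype.card_fin, nsmul_eq_mul] at h
    push_cast at h
    linarith
  have hfactor : 0 ≤ T * (S * T - 9) := by linarith
  rw [div_le_iff₀ hTpos]
  linarith [nonneg_of_mul_nonneg_right hfactor hTpos]
end

section
/- (Optimality of the bisection solution in the active-constraint case.) Let A be an N×N complex Hermitian matrix, R an N×N complex positive semidefinite Hermitian matrix, μ ≥ 0, δ > 0, ε ≥ 0. Let λ = λ_max(A − μR) ≥ 0 and let v ∈ ℂᴺ be a unit-norm eigenvector of A − μR for the eigenvalue λ such that Re(vᴴ R v) = ε/δ. Then f̂ = √δ · v satisfies Re(f̂ᴴ R f̂) = ε, ‖f̂‖² = δ, and Re(f̂ᴴ A f̂) = δλ + με; consequently, by the weak-duality bound, f̂ maximizes Re(fᴴ A f) over all f with Re(fᴴ R f) ≤ ε and ‖f‖² ≤ δ. -/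
open Matrix
open scoped ComplexOrder

/-!
The vector `f̂ = √δ • v` scales every quadratic form of `v` by `δ`, and
`A = (A - μR) + μR` gives `Re (f̂ᴴ A f̂) = δλ + με`. For a feasible `f`, the Rayleigh bound
`Re (fᴴ (A - μR) f) ≤ λ ‖f‖²` (`re_quadForm_le_iSup_eigenvalues`), together with `λ, μ ≥ 0`,
gives `Re (fᴴ A f) ≤ λ ‖f‖² + μ Re (fᴴ R f) ≤ δλ + με`, the value attained by `f̂`.
-/

lemma star_dotProduct_self_eq_sum_normSq {n : Type*} [Fintype n] (f : n → ℂ) :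
    star f ⬝ᵥ f = ((∑ k, Complex.normSq (f k) : ℝ) : ℂ) := by
  simp only [dotProduct, Pi.star_apply, Complex.ofReal_sum, RCLike.star_def,
    Complex.normSq_eq_conj_mul_self]

/-- Rayleigh bound, obtained by passing to the coordinates `Uᴴ f` in an orthonormal eigenbasis. -/
lemma re_quadForm_le_iSup_eigenvalues {n : Type*} [Fintype n] [DecidableEq n]
    {M : Matrix n n ℂ} (hM : M.IsHermitian) (f : n → ℂ) :
    (star f ⬝ᵥ (M *ᵥ f)).re ≤ (⨆ i, hM.eigenvalues i) * ∑ k, Complex.normSq (f k) := by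
  set U : Matrix n n ℂ := (hM.eigenvectorUnitary : Matrix n n ℂ) with hU
  have hUU : U * star U = 1 := Unitary.coe_mul_star_self hM.eigenvectorUnitary
  have hspec : M = U * diagonal (fun i => (hM.eigenvalues i : ℂ)) * star U := by
    have h := hM.spectral_theorem
    rw [Unitary.conjStarAlgAut_apply] at h
    exact h
  set g : n → ℂ := star U *ᵥ f with hg
  have hsg : star g = star f ᵥ* U := by
    rw [hg, star_mulVec, star_eq_conjTranspose, conjTranspose_conjTranspose]
  have hnorm : ∑ k, Complex.normSq (g k) = ∑ k, Complex.normSq (f k) := by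
    have h : star g ⬝ᵥ g = star f ⬝ᵥ f := by
      rw [hsg, hg, ← dotProduct_mulVec, mulVec_mulVec, hUU, one_mulVec]
    rw [star_dotProduct_self_eq_sum_normSq, star_dotProduct_self_eq_sum_normSq] at h
    exact_mod_cast h
  have hquad : star f ⬝ᵥ (M *ᵥ f)
      = ((∑ i, hM.eigenvalues i * Complex.normSq (g i) : ℝ) : ℂ) := by
    have h : star f ⬝ᵥ (M *ᵥ f)
        = star g ⬝ᵥ (diagonal (fun i => (hM.eigenvalues i : ℂ)) *ᵥ g) := by
      rw [hsg, hg, ← dotProduct_mulVec, mulVec_mulVec, mulVec_mulVec,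
        ← hspec]
    rw [h, dotProduct, Complex.ofReal_sum]
    refine Finset.sum_congr rfl fun i _ => ?_
    rw [mulVec_diagonal, Complex.ofReal_mul, Complex.normSq_eq_conj_mul_self, Pi.star_apply,
      RCLike.star_def]
    ring
  rw [hquad, Complex.ofReal_re, ← hnorm, Finset.mul_sum]
  exact Finset.sum_le_sum fun i _ => mul_le_mul_of_nonneg_right
    (le_ciSup (Set.finite_range _).bddAbove i) (Complex.normSq_nonneg _)

lemma re_quadForm_sqrt_smul {n : Type*} [Fintype n] (M : Matrix n n ℂ) {δ : ℝ} (hδ : 0 ≤ δ)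
    (v : n → ℂ) :
    (star ((Real.sqrt δ : ℂ) • v) ⬝ᵥ (M *ᵥ ((Real.sqrt δ : ℂ) • v))).re
      = δ * (star v ⬝ᵥ (M *ᵥ v)).re := by
  rw [star_smul, mulVec_smul, smul_dotProduct, dotProduct_smul, smul_smul, RCLike.star_def,
    Complex.conj_ofReal, ← Complex.ofReal_mul, Real.mul_self_sqrt hδ, smul_eq_mul,
    Complex.re_ofReal_mul]

lemma re_quadForm_sub_smul {n : Type*} [Fintype n] (A R : Matrix n n ℂ) (μ : ℝ) (f : n → ℂ) :
    (star f ⬝ᵥ ((A - (μ : ℂ) • R) *ᵥ f)).re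
      = (star f ⬝ᵥ (A *ᵥ f)).re - μ * (star f ⬝ᵥ (R *ᵥ f)).re := by
  rw [sub_mulVec, smul_mulVec, dotProduct_sub, dotProduct_smul, smul_eq_mul, Complex.sub_re,
    Complex.re_ofReal_mul]

/-- **Optimality of the bisection solution (paper, Appendix B, Case 3).** Let `A` be
Hermitian, `R` positive semidefinite, `μ ≥ 0`, `δ > 0`, `ε ≥ 0`, let
`λ = λ_max(A − μR) ≥ 0` (with `λ_max M = ⨆ i, eigenvalues M i`), and let `v` be a
unit-norm eigenvector of `A − μR` for `λ` with `Re (vᴴ R v) = ε/δ`. Then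
`f̂ = √δ • v` satisfies `Re (f̂ᴴ R f̂) = ε`, `‖f̂‖² = δ`, `Re (f̂ᴴ A f̂) = δλ + με`, and
maximizes `Re (fᴴ A f)` over all `f` with `Re (fᴴ R f) ≤ ε` and `‖f‖² ≤ δ`. -/
theorem bisection_solution_optimal {N : ℕ} (A R : Matrix (Fin N) (Fin N) ℂ)
    (hA : A.IsHermitian) (hR : R.PosSemidef) (μ δ ε : ℝ)
    (hμ : 0 ≤ μ) (hδ : 0 < δ) (hε : 0 ≤ ε)
    (hAR : (A - (μ : ℂ) • R).IsHermitian)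
    (hlam : 0 ≤ ⨆ i, hAR.eigenvalues i) (v : Fin N → ℂ)
    (hv_eig : (A - (μ : ℂ) • R) *ᵥ v = ((⨆ i, hAR.eigenvalues i : ℝ) : ℂ) • v)
    (hv_norm : ∑ k, Complex.normSq (v k) = 1)
    (hroot : (star v ⬝ᵥ (R *ᵥ v)).re = ε / δ) :
    (star ((Real.sqrt δ : ℂ) • v) ⬝ᵥ (R *ᵥ ((Real.sqrt δ : ℂ) • v))).re = ε ∧
    (∑ k, Complex.normSq (((Real.sqrt δ : ℂ) • v) k)) = δ ∧
    (star ((Real.sqrt δ : ℂ) • v) ⬝ᵥ (A *ᵥ ((Real.sqrt δ : ℂ) • v))).re =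
      δ * (⨆ i, hAR.eigenvalues i) + μ * ε ∧
    (∀ f : Fin N → ℂ, (star f ⬝ᵥ (R *ᵥ f)).re ≤ ε → (∑ k, Complex.normSq (f k)) ≤ δ →
      (star f ⬝ᵥ (A *ᵥ f)).re ≤
        (star ((Real.sqrt δ : ℂ) • v) ⬝ᵥ (A *ᵥ ((Real.sqrt δ : ℂ) • v))).re) := by
  have hAv : (star v ⬝ᵥ (A *ᵥ v)).re = (⨆ i, hAR.eigenvalues i) + μ * (ε / δ) := by
    have h := re_quadForm_sub_smul A R μ v
    rw [hv_eig, dotProduct_smul, star_dotProduct_self_eq_sum_normSq, hv_norm, hroot,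
      smul_eq_mul, Complex.re_ofReal_mul, Complex.ofReal_re] at h
    linarith
  have hval : (star ((Real.sqrt δ : ℂ) • v) ⬝ᵥ (A *ᵥ ((Real.sqrt δ : ℂ) • v))).re =
      δ * (⨆ i, hAR.eigenvalues i) + μ * ε := by
    rw [re_quadForm_sqrt_smul A hδ.le, hAv]
    field_simp
  refine ⟨?_, ?_, hval, fun f hfR hfN => ?_⟩
  · rw [re_quadForm_sqrt_smul R hδ.le, hroot, mul_div_cancel₀ _ hδ.ne']
  · simp only [Pi.smul_apply, smul_eq_mul, Complex.normSq_mul, Complex.normSq_ofReal,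
      Real.mul_self_sqrt hδ.le, ← Finset.mul_sum, hv_norm, mul_one]
  · rw [hval]
    have h1 := re_quadForm_le_iSup_eigenvalues hAR f
    rw [re_quadForm_sub_smul] at h1
    have h2 := mul_le_mul_of_nonneg_left hfN hlam
    have h3 := mul_le_mul_of_nonneg_left hfR hμ
    linarith
end

section
/- (Analytical gradient of the beampattern-matching loss, eq. (31).) Fix matrices A ∈ ℂ^{N×G} and L ∈ ℂ^{N×N}, vectors w ∈ ℂᴺ and q ∈ ℂᴳ, a phase vector φ ∈ ℝᴺ, and an index n. Define b(φ) = Aᵀ · (L · (diag(e^{iφ}) w)) ∈ ℂᴳ (where diag(e^{iφ})w is the vector with k-th entry e^{iφ_k} w_k), the residual r = b(φ) − q, the loss Jloss(φ) = Σ_g |b(φ)_g − q_g|², and the backprojected vector u = Lᴴ · (conj(A) · r) ∈ ℂᴺ (conj(A) entrywise). Then the function t ↦ Jloss(φ[n := t]) (varying only the n-th phase) has derivative at t = φ_n equal to 2 · Im( e^{−iφ_n} · conj(w_n) · u_n ). -/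
/-!
With `M = Aᵀ L` the field is `b(φ)_g = ∑ k, M g k * exp (i φ_k) * w_k`, so varying only `φ_n` gives
`∂b_g = M g n * (i * exp (i φ_n) * w_n)`. Since the derivative of `|z|²` along a real curve is
`2 Re (conj z' * z)`, the loss has derivative
`2 Re (-i * exp (-i φ_n) * conj w_n * ∑ g, conj (M g n) * r_g)`. The sum is the `n`-th entry of
`Mᴴ r = Lᴴ (conj(A) r)`, and `Re (-i z) = Im z`.
-/

open Matrix

theorem hasDerivAt_normSq_comp {f : ℝ → ℂ} {f' : ℂ} {t : ℝ} (hf : HasDerivAt f f' t) :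
    HasDerivAt (fun s => Complex.normSq (f s)) (2 * ((starRingEnd ℂ) f' * f t).re) t := by
  have hre : HasDerivAt (fun s => (f s).re) f'.re t :=
    Complex.reCLM.hasFDerivAt.comp_hasDerivAt t hf
  have him : HasDerivAt (fun s => (f s).im) f'.im t :=
    Complex.imCLM.hasFDerivAt.comp_hasDerivAt t hf
  refine ((hre.mul hre).add (him.mul him)).congr_deriv ?_
  simp only [Complex.mul_re, Complex.conj_re, Complex.conj_im]
  ring

theorem hasDerivAt_phase_entry {N : ℕ} (w : Fin N → ℂ) (φ : Fin N → ℝ) (n k : Fin N) :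
    HasDerivAt (fun t : ℝ => Complex.exp (Complex.I * (Function.update φ n t k)) * w k)
      (if k = n then Complex.I * Complex.exp (Complex.I * (φ n)) * w n else 0) (φ n) := by
  by_cases h : k = n
  · subst h
    simp only [Function.update_self, if_true]
    have h1 : HasDerivAt (fun t : ℝ => Complex.I * (t : ℂ)) (Complex.I * 1) (φ k) :=
      (Complex.ofRealCLM.hasDerivAt (x := φ k)).const_mul Complex.I
    refine (h1.cexp.mul_const (w k)).congr_deriv ?_
    ring
  · simp only [Function.update_of_ne h, if_neg h]
    exact hasDerivAt_const _ _

theorem hasDerivAt_mulVec_phase {N G : ℕ} (M : Matrix (Fin G) (Fin N) ℂ) (w : Fin N → ℂ)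
    (φ : Fin N → ℝ) (n : Fin N) (g : Fin G) :
    HasDerivAt
      (fun t : ℝ =>
        (M *ᵥ fun k => Complex.exp (Complex.I * (Function.update φ n t k)) * w k) g)
      (M g n * (Complex.I * Complex.exp (Complex.I * (φ n)) * w n)) (φ n) := by
  have h := HasDerivAt.fun_sum (u := Finset.univ) fun k _ =>
    (hasDerivAt_phase_entry w φ n k).const_mul (M g k)
  refine h.congr_deriv ?_
  simp

/-- Backprojection through `conj(A)` and `Lᴴ` is multiplication by the adjoint of `Aᵀ L`. -/
theorem backprojection_apply {N G : ℕ} (A : Matrix (Fin N) (Fin G) ℂ)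
    (L : Matrix (Fin N) (Fin N) ℂ) (r : Fin G → ℂ) (n : Fin N) :
    (Lᴴ *ᵥ (A.map (starRingEnd ℂ) *ᵥ r)) n = ∑ g, (starRingEnd ℂ) ((Aᵀ * L) g n) * r g := by
  have h : Lᴴ * A.map (starRingEnd ℂ) = (Aᵀ * L)ᴴ := by
    rw [conjTranspose_mul]
    rfl
  rw [mulVec_mulVec, h]
  rfl

/-- **Per-element gradient of the beampattern-matching loss (paper, eqs. (29)–(31)).**
With `b(φ) = Aᵀ (L (diag(e^{iφ}) w))`, residual `r = b(φ) − q`, loss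
`J(φ) = Σ_g |b(φ)_g − q_g|²`, and backprojected vector `u = Lᴴ (conj(A) r)`, the
derivative of the loss in the single phase `φ_n` equals
`2 Im (e^{−iφ_n} conj(w_n) u_n)`. -/
theorem loss_phase_derivative {N G : ℕ} (A : Matrix (Fin N) (Fin G) ℂ)
    (L : Matrix (Fin N) (Fin N) ℂ) (w : Fin N → ℂ) (q : Fin G → ℂ)
    (φ : Fin N → ℝ) (n : Fin N) :
    HasDerivAt
      (fun t : ℝ => ∑ g, Complex.normSq
        ((Aᵀ *ᵥ (L *ᵥ fun k => Complex.exp (Complex.I * (Function.update φ n t k)) * w k)) g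
          - q g))
      (2 * (Complex.exp (-(Complex.I * (φ n))) * (starRingEnd ℂ) (w n) *
        (Lᴴ *ᵥ (A.map (starRingEnd ℂ) *ᵥ fun g =>
          (Aᵀ *ᵥ (L *ᵥ fun k => Complex.exp (Complex.I * (φ k)) * w k)) g - q g)) n).im)
      (φ n) := by
  simp only [mulVec_mulVec _ Aᵀ L]
  refine (HasDerivAt.fun_sum (u := Finset.univ) fun g _ => hasDerivAt_normSq_comp
    ((hasDerivAt_mulVec_phase (Aᵀ * L) w φ n g).sub_const (q g))).congr_deriv ?_
  rw [backprojection_apply, ← Finset.mul_sum, ← Complex.re_sum, Finset.mul_sum]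
  simp only [Function.update_eq_self]
  -- `Im z = Re (-i z)` turns both sides into real parts of complex sums.
  have him (z : ℂ) : z.im = (-Complex.I * z).re := by simp
  rw [him, Finset.mul_sum]
  congr 2
  refine Finset.sum_congr rfl fun g _ => ?_
  have hexp : (starRingEnd ℂ) (Complex.exp (Complex.I * (φ n))) =
      Complex.exp (-(Complex.I * (φ n))) := by
    rw [← Complex.exp_conj, map_mul, Complex.conj_I, Complex.conj_ofReal, neg_mul]
  simp only [map_mul, hexp, Complex.conj_I]
  ring
end
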